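/- Let C ⊂ ℙ²(ℂ) be the nodal cubic defined by x³ + x²z − y²z = 0, whose unique singular point is the node (0:0:1), and let C⁰ = C \ {(0:0:1)} be its set of smooth points. Then there exists a bijection φ : ℂ* → C⁰ such that for all pairwise distinct s, t, u ∈ ℂ*, the three points φ(s), φ(t), φ(u) are collinear if and only if s·t·u = 1. (Thus the collinearity relation makes C⁰ a group isomorphic to the multiplicative group ℂ*.) -/

import Mathlib

/-- The complex projective plane ℙ²(ℂ) = ℙ(ℂ³). -/
abbrev P2 : Type := Projectivization ℂ (Fin 3 → ℂ)

/-- Three points of ℙ²(ℂ) are collinear if representative vectors in ℂ³ span a linear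
subspace of dimension at most 2. -/
def Collin (p q r : P2) : Prop :=
  Module.finrank ℂ (Submodule.span ℂ {p.rep, q.rep, r.rep} : Submodule ℂ (Fin 3 → ℂ)) ≤ 2

lemma vec_ne_zero {a b c : ℂ} (h : a ≠ 0 ∨ b ≠ 0 ∨ c ≠ 0) : ![a, b, c] ≠ 0 := by
  intro hz
  rcases h with h | h | h
  · exact h (by simpa using congrFun hz 0)
  · exact h (by simpa using congrFun hz 1)
  · exact h (by simpa using congrFun hz 2)

/-- The nodal cubic x³ + x²z − y²z = 0 in ℙ²(ℂ). -/
def nodalCubic : Set P2 :=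
  {p | p.rep 0 ^ 3 + p.rep 0 ^ 2 * p.rep 2 - p.rep 1 ^ 2 * p.rep 2 = 0}

/-- The node (0:0:1) of the nodal cubic. -/
noncomputable def nodePt : P2 := Projectivization.mk ℂ ![0, 0, 1] (vec_ne_zero (Or.inr (Or.inr one_ne_zero)))

/-!
The two tangents at the node, `y = x` and `y = -x`, meet the curve only there, so
`t = (y + x) / (y - x)` has neither zero nor pole on the smooth part of the curve. Together with
`x ^ 3 = (y ^ 2 - x ^ 2) z` it determines the point as `(4t(t - 1) : 4t(t + 1) : (t - 1) ^ 3)`.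
A line `a x + b y + c z = 0` not passing through the node pulls back to a cubic in `t` with
leading coefficient `c` and constant term `-c`, whose roots therefore have product `1`; the
determinant of three parametrized points makes this explicit, being the Vandermonde product times
`s t u - 1` up to a constant.
-/

open scoped LinearAlgebra.Projectivization

section Dependent

variable {K V ι : Type*} [DivisionRing K] [AddCommGroup V] [Module K V]

theorem dependent_iff_finrank_span_lt_card [Fintype ι] (p : ι → ℙ K V) :
    Projectivization.Dependent p ↔
      Module.finrank K (Submodule.span K (Set.range (Projectivization.rep ∘ p))) <
        Fintype.card ι := by
  rw [Projectivization.dependent_iff, linearIndependent_iff_card_le_finrank_span, Set.finrank,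
    not_le]

theorem dependent_iff_finrank_span_le_two (p q r : ℙ K V) :
    Projectivization.Dependent ![p, q, r] ↔
      Module.finrank K (Submodule.span K {p.rep, q.rep, r.rep}) ≤ 2 := by
  have range_rep : Set.range (Projectivization.rep ∘ ![p, q, r]) = {p.rep, q.rep, r.rep} := by
    simp only [Set.range_comp, Matrix.range_cons, Matrix.range_empty, Set.union_empty,
      ← Set.insert_eq, Set.image_insert_eq, Set.image_singleton]
  rw [dependent_iff_finrank_span_lt_card, range_rep, Fintype.card_fin, Nat.lt_succ_iff]

theorem dependent_mk_iff_not_linearIndependent (v : ι → V) (hv : ∀ i, v i ≠ 0) :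
    Projectivization.Dependent (fun i ↦ Projectivization.mk K (v i) (hv i)) ↔
      ¬ LinearIndependent K v := by
  choose a ha using fun i ↦ Projectivization.exists_smul_eq_mk_rep K (v i) (hv i)
  have rep_eq : (Projectivization.rep ∘ fun i ↦ Projectivization.mk K (v i) (hv i)) = a • v :=
    funext fun i ↦ (ha i).symm
  rw [Projectivization.dependent_iff, rep_eq, LinearIndependent.units_smul_iff]

end Dependent

theorem dependent_mk_iff_det_eq_zero {K n : Type*} [Field K] [Fintype n] [DecidableEq n]
    (v : n → n → K) (hv : ∀ i, v i ≠ 0) :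
    Projectivization.Dependent (fun i ↦ Projectivization.mk K (v i) (hv i)) ↔
      (Matrix.of v).det = 0 := by
  have independent_iff : LinearIndependent K v ↔ (Matrix.of v).det ≠ 0 := by
    rw [← isUnit_iff_ne_zero, ← Matrix.isUnit_iff_isUnit_det]
    exact Matrix.linearIndependent_rows_iff_isUnit
  rw [dependent_mk_iff_not_linearIndependent, independent_iff, not_ne_iff]

namespace NodalCubic

section CommRing

variable {R : Type*} [CommRing R]

/-- The cubic form `x³ + x²z - y²z` whose zero locus is the nodal cubic, evaluated at the vector
`(x, y, z)`. -/
def form (v : Fin 3 → R) : R := v 0 ^ 3 + v 0 ^ 2 * v 2 - v 1 ^ 2 * v 2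

/-- Homogeneous coordinates, polynomial in `t`, of the point of the nodal cubic at which
`(y + x) / (y - x)` takes the value `t`. -/
def paramVec (t : R) : Fin 3 → R := ![4 * t * (t - 1), 4 * t * (t + 1), (t - 1) ^ 3]

theorem form_smul (a : R) (v : Fin 3 → R) : form (a • v) = a ^ 3 * form v := by
  simp only [form, Pi.smul_apply, smul_eq_mul]
  ring

theorem form_paramVec (t : R) : form (paramVec t) = 0 := by
  simp only [form, paramVec, Matrix.cons_val]
  ring

theorem paramVec_one_sub_zero (t : R) : paramVec t 1 - paramVec t 0 = 2 ^ 3 * t := by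
  simp only [paramVec, Matrix.cons_val]
  ring

theorem paramVec_one_add_zero (t : R) : paramVec t 1 + paramVec t 0 = 2 ^ 3 * t ^ 2 := by
  simp only [paramVec, Matrix.cons_val]
  ring

theorem det_paramVec (s t u : R) :
    (Matrix.of ![paramVec s, paramVec t, paramVec u]).det =
      -2 ^ 5 * (s * t * u - 1) * ((t - s) * (u - s) * (u - t)) := by
  simp only [Matrix.det_fin_three, Matrix.of_apply, paramVec, Matrix.cons_val]
  ring

theorem eq_zero_of_sq_sub_sq_eq_zero [IsReduced R] {v : Fin 3 → R} (hv : form v = 0)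
    (h : v 1 ^ 2 - v 0 ^ 2 = 0) : v 0 = 0 ∧ v 1 = 0 := by
  have h0 : v 0 = 0 := by
    refine eq_zero_of_pow_eq_zero (n := 3) ?_
    simp only [form] at hv
    linear_combination hv + v 2 * h
  refine ⟨h0, eq_zero_of_pow_eq_zero (n := 2) ?_⟩
  linear_combination h + v 0 * h0

end CommRing

section Field

variable {K : Type*} [Field K]

theorem paramVec_div {v : Fin 3 → K} (hv : form v = 0) (hsub : v 1 - v 0 ≠ 0) :
    paramVec ((v 1 + v 0) / (v 1 - v 0)) = (8 * (v 1 + v 0) / (v 1 - v 0) ^ 2) • v := by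
  simp only [form] at hv
  ext i
  fin_cases i <;>
    simp only [paramVec, Fin.zero_eta, Fin.mk_one, Fin.reduceFinMk, Matrix.cons_val,
      Pi.smul_apply, smul_eq_mul] <;>
    field_simp
  · ring
  · ring
  · linear_combination 8 * hv

variable (K) in
/-- The nodal cubic `x³ + x²z - y²z = 0` in `ℙ²(K)`; the condition does not depend on the chosen
representatives, by `mk_mem_curve_iff`. -/
def curve : Set (ℙ K (Fin 3 → K)) := {p | form p.rep = 0}

variable (K) in
/-- The node `(0 : 0 : 1)` of the nodal cubic over `K`. -/
noncomputable def node : ℙ K (Fin 3 → K) :=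
  Projectivization.mk K ![0, 0, 1] fun h ↦ one_ne_zero (congrFun h 2)

theorem mk_mem_curve_iff {v : Fin 3 → K} (hv : v ≠ 0) :
    Projectivization.mk K v hv ∈ curve K ↔ form v = 0 := by
  obtain ⟨a, ha⟩ := Projectivization.exists_smul_eq_mk_rep K v hv
  rw [curve, Set.mem_ofPred_eq, ← ha, Units.smul_def, form_smul]
  simp

theorem mk_eq_node_iff {v : Fin 3 → K} (hv : v ≠ 0) :
    Projectivization.mk K v hv = node K ↔ v 0 = 0 ∧ v 1 = 0 := by
  rw [node, Projectivization.mk_eq_mk_iff']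
  constructor
  · rintro ⟨a, rfl⟩
    simp
  · rintro ⟨h0, h1⟩
    refine ⟨v 2, ?_⟩
    ext i
    fin_cases i <;> simp [h0, h1]

variable [NeZero (2 : K)]

theorem paramVec_one_sub_zero_ne_zero (t : Kˣ) : paramVec (t : K) 1 - paramVec (t : K) 0 ≠ 0 := by
  rw [paramVec_one_sub_zero]
  exact mul_ne_zero (pow_ne_zero 3 two_ne_zero) t.ne_zero

theorem paramVec_ne_zero (t : Kˣ) : paramVec (t : K) ≠ 0 := by
  intro h
  exact paramVec_one_sub_zero_ne_zero t (by simp [h])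

/-- The parametrization of the smooth part of the nodal cubic by `Kˣ`, inverse to
`(x : y : z) ↦ (y + x) / (y - x)`. -/
noncomputable def param (t : Kˣ) : ℙ K (Fin 3 → K) :=
  Projectivization.mk K (paramVec (t : K)) (paramVec_ne_zero t)

theorem param_injective : Function.Injective (param (K := K)) := by
  intro s t h
  obtain ⟨a, ha⟩ := (Projectivization.mk_eq_mk_iff' K _ _ _ _).1 h
  have coord_eq (i : Fin 3) : a * paramVec (t : K) i = paramVec (s : K) i := congrFun ha i
  have hsub : a * t = s := by
    refine mul_left_cancel₀ (pow_ne_zero 3 two_ne_zero) ?_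
    linear_combination coord_eq 1 - coord_eq 0 - a * paramVec_one_sub_zero (t : K) +
      paramVec_one_sub_zero (s : K)
  have hadd : a * t ^ 2 = s ^ 2 := by
    refine mul_left_cancel₀ (pow_ne_zero 3 two_ne_zero) ?_
    linear_combination coord_eq 1 + coord_eq 0 - a * paramVec_one_add_zero (t : K) +
      paramVec_one_add_zero (s : K)
  refine Units.ext (mul_left_cancel₀ s.ne_zero ?_)
  linear_combination t * hsub - hadd

theorem range_param : Set.range (param (K := K)) = curve K \ {node K} := by
  apply Set.Subset.antisymm
  · rintro _ ⟨t, rfl⟩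
    refine ⟨(mk_mem_curve_iff _).2 (form_paramVec _), fun h ↦ ?_⟩
    obtain ⟨h0, h1⟩ := (mk_eq_node_iff _).1 h
    exact paramVec_one_sub_zero_ne_zero t (by rw [h0, h1, sub_zero])
  · rintro p ⟨hcurve, hnode⟩
    induction p using Projectivization.ind with | h v hv
    have form_eq : form v = 0 := (mk_mem_curve_iff hv).1 hcurve
    have sq_sub_sq_ne : v 1 ^ 2 - v 0 ^ 2 ≠ 0 := fun h ↦
      hnode ((mk_eq_node_iff hv).2 (eq_zero_of_sq_sub_sq_eq_zero form_eq h))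
    obtain ⟨hadd, hsub⟩ := mul_ne_zero_iff.1 (sq_sub_sq (v 1) (v 0) ▸ sq_sub_sq_ne)
    exact ⟨Units.mk0 _ (div_ne_zero hadd hsub),
      (Projectivization.mk_eq_mk_iff' K _ _ _ _).2 ⟨_, (paramVec_div form_eq hsub).symm⟩⟩

theorem dependent_param_iff {s t u : Kˣ} (hst : s ≠ t) (hsu : s ≠ u) (htu : t ≠ u) :
    Projectivization.Dependent ![param s, param t, param u] ↔ s * t * u = 1 := by
  have coords_ne (i : Fin 3) : ![paramVec (s : K), paramVec (t : K), paramVec (u : K)] i ≠ 0 := by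
    fin_cases i <;> exact paramVec_ne_zero _
  have points_eq :
      ![param s, param t, param u] = fun i ↦ Projectivization.mk K _ (coords_ne i) := by
    ext i; fin_cases i <;> rfl
  have constant_ne : -(2 : K) ^ 5 ≠ 0 := neg_ne_zero.2 (pow_ne_zero 5 two_ne_zero)
  have vandermonde_ne : ((t : K) - s) * (u - s) * (u - t) ≠ 0 := by
    simp [sub_eq_zero, Units.val_inj, hst.symm, hsu.symm, htu.symm]
  rw [points_eq, dependent_mk_iff_det_eq_zero, det_paramVec,
    mul_eq_zero_iff_right vandermonde_ne, mul_eq_zero_iff_left constant_ne, sub_eq_zero,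
    Units.ext_iff, Units.val_mul, Units.val_mul, Units.val_one]

end Field

end NodalCubic

open NodalCubic in
theorem nodal_cubic_group_law_general (K : Type*) [Field K] [NeZero (2 : K)] :
    ∃ φ : Kˣ → ℙ K (Fin 3 → K), Function.Injective φ ∧ Set.range φ = curve K \ {node K} ∧
      ∀ s t u : Kˣ, s ≠ t → s ≠ u → t ≠ u →
        (Projectivization.Dependent ![φ s, φ t, φ u] ↔ s * t * u = 1) :=
  ⟨param, param_injective, range_param, fun _ _ _ ↦ dependent_param_iff⟩

/-- There is a bijection φ : ℂ* → C⁰ from the multiplicative group ℂ* onto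
the set of smooth points of the nodal cubic such that for pairwise distinct s, t, u the
points φ s, φ t, φ u are collinear iff s·t·u = 1. -/
theorem nodal_cubic_group_law :
    ∃ φ : ℂˣ → P2, Function.Injective φ ∧ Set.range φ = nodalCubic \ {nodePt} ∧
      ∀ s t u : ℂˣ, s ≠ t → s ≠ u → t ≠ u →
        (Collin (φ s) (φ t) (φ u) ↔ s * t * u = 1) := by
  simp only [Collin, ← dependent_iff_finrank_span_le_two]
  exact nodal_cubic_group_law_general ℂ
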